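/- Let K be a field of characteristic 0, M/K a finite Galois extension with group G, and X = {δ₁,…,δ_n} ⊂ M a G-orbit generating M over K with ∑_i δ_i = 0 and δ₁ ≠ 0. Suppose G acts 2-transitively on X. Let L = K(δ₁), V₀ the space of ℚ-valued functions on X summing to 0. Then the K[G]-module map φ : ker(Tr_{L/K}) ⊗ V₀ → M sending γ ⊗ ∑ a_i [g_i G₁] ↦ ∑ a_i g_i(γ) is injective. -/

import Mathlib

open Finset TensorProduct

theorem agree_on_adjoin {K M : Type*} [Field K] [Field M] [Algebra K M]
    (d : M) (σ τ : M ≃ₐ[K] M) (h : σ d = τ d) (x : M)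
    (hx : x ∈ IntermediateField.adjoin K {d}) : σ x = τ x := by
  induction hx using IntermediateField.adjoin_induction with
  | mem x hx => rw [Set.mem_singleton_iff] at hx; rw [hx, h]
  | algebraMap x => simp
  | add x y _ _ hx hy => simp [hx, hy]
  | inv x _ hx => simp [hx]
  | mul x y _ _ hx hy => simp [hx, hy]

/-- Let `K` be a field of characteristic `0`, `M/K` a finite Galois extension,
`X = {δ₁,…,δ_n} ⊂ M` a Galois orbit generating `M` over `K`, with `∑ δᵢ = 0` and
`δ₁ ≠ 0`, on which the Galois group acts 2-transitively.  Let `L = K(δ₁)` and let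
`V₀` be the space of functions on `X` summing to `0`.  Then the `K`-linear map
`φ : ker(Tr_{L/K}) ⊗ V₀ → M`, `γ ⊗ ∑ aᵢ [gᵢG₁] ↦ ∑ aᵢ gᵢ(γ)`, is injective. -/
theorem phi_injective (K M : Type*) [Field K] [CharZero K] [Field M] [Algebra K M]
    [FiniteDimensional K M] [IsGalois K M]
    (n : ℕ) (hn : 2 ≤ n) (δ : Fin n → M) (hinj : Function.Injective δ)
    (horb : ∀ σ : M ≃ₐ[K] M, ∀ i, ∃ j, σ (δ i) = δ j)
    (h2t : ∀ i₁ i₂ j₁ j₂ : Fin n, i₁ ≠ i₂ → j₁ ≠ j₂ →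
      ∃ σ : M ≃ₐ[K] M, σ (δ i₁) = δ j₁ ∧ σ (δ i₂) = δ j₂)
    (hgen : IntermediateField.adjoin K (Set.range δ) = ⊤)
    (hsum : ∑ i, δ i = 0)
    (hδ0 : δ ⟨0, by omega⟩ ≠ 0)
    (L : IntermediateField K M) (hL : L = IntermediateField.adjoin K {δ ⟨0, by omega⟩})
    (g : Fin n → (M ≃ₐ[K] M)) (hg : ∀ i, g i (δ ⟨0, by omega⟩) = δ i)
    (V₀ : Submodule K (Fin n → K))
    (hV₀ : V₀ = LinearMap.ker (∑ i : Fin n, LinearMap.proj i))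
    (ψ : (LinearMap.ker (Algebra.trace K L) ⊗[K] V₀) →ₗ[K] M)
    (hψ : ∀ (γ : LinearMap.ker (Algebra.trace K L)) (a : V₀),
      ψ (γ ⊗ₜ a) = ∑ i, (a : Fin n → K) i • (g i ((γ : L) : M))) :
    Function.Injective ψ := by
  have hn0 : 0 < n := by omega
  have key : ∀ (σ : M ≃ₐ[K] M) (i k : Fin n), σ (δ i) = δ k → ∀ x ∈ L,
      σ (g i x) = g k x := by
    intro σ i k h x hx
    rw [hL] at hx
    refine agree_on_adjoin _ (σ * g i) (g k) ?_ x hx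
    rw [AlgEquiv.mul_apply, hg, hg, h]
  have : CharZero M := charZero_of_injective_algebraMap (algebraMap K M).injective
  classical
  have hsm : ∀ (σ : M ≃ₐ[K] M) (c : K) (y : M), σ (c • y) = c • σ y := by
    intro σ c y
    simp [Algebra.smul_def]
  -- the sum of conjugates of a trace zero element vanishes
  have htr : ∀ γ : LinearMap.ker (Algebra.trace K L), ∑ i, g i ((γ : L) : M) = 0 := by
    intro γ
    set x : M := ((γ : L) : M) with hx
    have hxL : x ∈ L := (γ : L).2
    have h1 : ∑ σ : M ≃ₐ[K] M, σ x = 0 := by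
      rw [← trace_eq_sum_automorphisms, ← Algebra.trace_trace (S := L)]
      have : x = algebraMap L M (γ : L) := rfl
      rw [this, Algebra.trace_algebraMap, map_nsmul, LinearMap.mem_ker.1 γ.2]
      simp
    have hinv : ∀ τ : M ≃ₐ[K] M, τ (∑ i, g i x) = ∑ i, g i x := by
      intro τ
      choose p hp using horb τ
      have hpi : Function.Injective p := by
        intro a b hab
        apply hinj
        apply τ.injective
        rw [hp, hp, hab]
      rw [map_sum]
      have hpb : Function.Bijective p := Finite.injective_iff_bijective.1 hpi
      rw [← Equiv.sum_comp (Equiv.ofBijective p hpb) (fun i => g i x)]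
      exact Finset.sum_congr rfl fun i _ => key τ i (p i) (hp i) x hxL
    have h2 : ∑ τ : M ≃ₐ[K] M, τ (∑ i, g i x) = 0 := by
      simp_rw [map_sum]
      rw [Finset.sum_comm]
      refine Finset.sum_eq_zero fun i _ => ?_
      rw [← h1]
      exact Equiv.sum_comp (Equiv.mulRight (g i)) (fun σ : M ≃ₐ[K] M => σ x)
    simp_rw [hinv] at h2
    rw [Finset.sum_const, smul_eq_zero] at h2
    refine h2.resolve_left ?_
    simp [Finset.card_univ]
  -- coordinates
  let E : (LinearMap.ker (Algebra.trace K L) ⊗[K] V₀) →ₗ[K]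
      (Fin n → LinearMap.ker (Algebra.trace K L)) :=
    (TensorProduct.piScalarRight K K (LinearMap.ker (Algebra.trace K L)) (Fin n)).toLinearMap ∘ₗ
      LinearMap.lTensor _ V₀.subtype
  have hEinj : Function.Injective E := by
    refine (TensorProduct.piScalarRight K K
      (LinearMap.ker (Algebra.trace K L)) (Fin n)).injective.comp ?_
    exact Module.Flat.lTensor_preserves_injective_linearMap _ V₀.injective_subtype
  have hE : ∀ γ (a : V₀) j, E (γ ⊗ₜ a) j = (a : Fin n → K) j • γ := by
    intro γ a j
    simp [E]
  let ι : LinearMap.ker (Algebra.trace K L) →ₗ[K] M :=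
    L.val.toLinearMap ∘ₗ (LinearMap.ker (Algebra.trace K L)).subtype
  have hι : ∀ γ, ι γ = ((γ : L) : M) := fun _ => rfl
  have hfin : ∀ S : Subgroup (M ≃ₐ[K] M), Nonempty (Fintype S) := fun S =>
    ⟨Fintype.ofFinite S⟩
  let _ : ∀ S : Subgroup (M ≃ₐ[K] M), Fintype S := fun S => (hfin S).some
  have main : ∀ j t, ((n : K) - 1) • ∑ σ : MulAction.stabilizer (M ≃ₐ[K] M) (δ j), σ.1 (ψ t) =
      ((n : K) * (Nat.card (MulAction.stabilizer (M ≃ₐ[K] M) (δ j)) : K)) • g j (ι (E t j)) := by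
    intro j t
    induction t using TensorProduct.induction_on with
    | zero => simp
    | add s t hs ht =>
      simp only [map_add, Finset.sum_add_distrib, smul_add, hs, ht, Pi.add_apply]
    | tmul γ a =>
      rw [hψ, hE, map_smul, hsm, hι]
      set x : M := ((γ : L) : M) with hx
      have hxL : x ∈ L := (γ : L).2
      have ha : ∑ i, (a : Fin n → K) i = 0 := by
        have := hV₀.le a.2
        rw [LinearMap.mem_ker] at this
        simpa using this
      have hT := htr γ
      rw [← hx] at hT
      set S := MulAction.stabilizer (M ≃ₐ[K] M) (δ j) with hS
      let T : Fin n → M := fun i => ∑ σ : S, σ.1 (g i x)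
      have hTj : T j = (Nat.card S : K) • g j x := by
        have : ∀ σ : S, σ.1 (g j x) = g j x := fun σ => key σ.1 j j σ.2 x hxL
        simp only [T, this, Finset.sum_const, Finset.card_univ, Nat.card_eq_fintype_card]
        rw [Nat.cast_smul_eq_nsmul]
      have hTi : ∀ i k, i ≠ j → k ≠ j → T i = T k := by
        intro i k hi hk
        obtain ⟨ρ, h1, h2⟩ := h2t j i j k hi.symm hk.symm
        have hρ : ρ ∈ S := h1
        simp only [T]
        rw [← Equiv.sum_comp (Equiv.mulRight (⟨ρ, hρ⟩ : S)) (fun σ : S => σ.1 (g i x))]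
        refine Finset.sum_congr rfl fun σ _ => ?_
        change σ.1 (ρ (g i x)) = _
        rw [key ρ i k h2 x hxL]
      have hTs : ∑ i, T i = 0 := by
        simp only [T]
        rw [Finset.sum_comm]
        refine Finset.sum_eq_zero fun σ _ => ?_
        rw [← map_sum, hT, map_zero]
      have hTn : ∀ i, i ≠ j → ((n : K) - 1) • T i = - T j := by
        intro i hi
        rw [← Finset.add_sum_erase _ _ (Finset.mem_univ j)] at hTs
        have : ∑ k ∈ Finset.univ.erase j, T k = ((n : K) - 1) • T i := by
          rw [Finset.sum_congr rfl (fun k hk => hTi k i (Finset.ne_of_mem_erase hk) hi),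
            Finset.sum_const, Finset.card_erase_of_mem (Finset.mem_univ j), Finset.card_univ,
            Fintype.card_fin, ← Nat.cast_smul_eq_nsmul K, Nat.cast_sub hn0, Nat.cast_one]
        rw [this] at hTs
        exact eq_neg_of_add_eq_zero_right hTs
      have hL1 : ∑ σ : S, σ.1 (∑ i, (a : Fin n → K) i • g i x) = ∑ i, (a : Fin n → K) i • T i := by
        simp only [map_sum, hsm, T, Finset.smul_sum]
        rw [Finset.sum_comm]
      rw [hL1, ← Finset.add_sum_erase _ _ (Finset.mem_univ j), smul_add]
      have h3 : ∑ i ∈ Finset.univ.erase j, ((n : K) - 1) • (a : Fin n → K) i • T i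
          = (a : Fin n → K) j • T j := by
        rw [Finset.sum_congr rfl (g := fun i => (a : Fin n → K) i • (- T j)) (fun i hi => by
          rw [smul_comm, hTn i (Finset.ne_of_mem_erase hi)]), ← Finset.sum_smul]
        rw [← Finset.add_sum_erase _ _ (Finset.mem_univ j)] at ha
        rw [eq_neg_of_add_eq_zero_right ha, neg_smul, smul_neg, neg_neg]
      rw [← Finset.smul_sum] at h3
      rw [h3, hTj]
      simp only [smul_smul, ← add_smul]
      congr 1
      ring
  rw [injective_iff_map_eq_zero]
  intro t ht
  apply hEinj
  rw [map_zero]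
  funext j
  have h := main j t
  simp only [ht, map_zero, Finset.sum_const_zero, smul_zero] at h
  have h' := (smul_eq_zero.1 h.symm).resolve_left (by
    refine mul_ne_zero (Nat.cast_ne_zero.2 hn0.ne') (Nat.cast_ne_zero.2 Nat.card_pos.ne'))
  rw [map_eq_zero_iff _ (g j).injective, hι] at h'
  exact Subtype.ext (Subtype.ext h')
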